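/- For each positive integer n, ∑_{T ∈ B(n)} f^{T̂} · ∏_{v ∈ T} 1/2^{2h_v - 1} = 1, where the sum is over all binary trees T with n vertices, T̂ is the completion of T, f^{T̂} is the number of increasing labelings of T̂, and h_v is the hook length of v in T. -/

import Mathlib

/-- A binary tree: `nil` is the empty tree, and a vertex may have an empty or
nonempty left subtree and an empty or nonempty right subtree.  The binary
trees with `n` vertices are the `T : BinTree` with `T.size = n`. -/
inductive BinTree : Type where
  | nil : BinTree
  | node (l r : BinTree) : BinTree
deriving DecidableEq

/-- The number of vertices of a binary tree. -/
def BinTree.size : BinTree → ℕ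
  | .nil => 0
  | .node l r => l.size + r.size + 1

/-- The product, over all vertices `v` of a binary tree, of `f h_v`, where
`h_v` is the hook length of `v` (the number of descendants of `v`, including
`v` itself). -/
def BinTree.hookProd (f : ℕ → ℝ) : BinTree → ℝ
  | .nil => 1
  | .node l r => f (l.size + r.size + 1) * l.hookProd f * r.hookProd f

/-- The vertices of a binary tree, encoded as paths from the root
(`false` = go to left child, `true` = go to right child). -/
def BinTree.positions : BinTree → List (List Bool)
  | .nil => []
  | .node l r =>
      [] :: (l.positions.map (fun p => false :: p) ++ r.positions.map (fun p => true :: p))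

/-- The number `f^T` of increasing labelings of a binary tree `T`: bijections
`ℓ` from the vertices of `T` to `{1, …, |T|}` (here `Fin T.size`) such that
`ℓ v < ℓ w` whenever `w` is a child of `v`. -/
noncomputable def BinTree.incLabelings (T : BinTree) : ℕ :=
  Nat.card {ℓ : {p // p ∈ T.positions} → Fin T.size //
    Function.Bijective ℓ ∧
    ∀ v w : {p // p ∈ T.positions}, (∃ b, (w : List Bool) = (v : List Bool) ++ [b]) → ℓ v < ℓ w}

/-- The completion `T̂` of a binary tree `T`: the complete binary tree on
`2|T|+1` vertices obtained from `T` by adding all `|T|+1` possible leaves. -/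
def BinTree.completion : BinTree → BinTree
  | .nil => .node .nil .nil
  | .node l r => .node l.completion r.completion

namespace BinTree

abbrev Pos (T : BinTree) := {p // p ∈ T.positions}

def Inc (T : BinTree) {α : Type} [LT α] (ℓ : T.Pos → α) : Prop :=
  ∀ v w : T.Pos, (∃ b, (w : List Bool) = (v : List Bool) ++ [b]) → ℓ v < ℓ w

abbrev Lab (T : BinTree) (α : Type) [LT α] :=
  {ℓ : T.Pos → α // Function.Bijective ℓ ∧ T.Inc ℓ}

lemma positions_nodup (T : BinTree) : T.positions.Nodup := by
  induction T with
  | nil => simp [positions]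
  | node l r ihl ihr =>
    simp only [positions, List.nodup_cons, List.nodup_append]
    refine ⟨by simp, ihl.map (fun a b h => by simpa using h),
      ihr.map (fun a b h => by simpa using h), ?_⟩
    intro a ha b hb
    simp only [List.mem_map] at ha hb
    obtain ⟨x, _, rfl⟩ := ha
    obtain ⟨y, _, rfl⟩ := hb
    simp

lemma positions_length (T : BinTree) : T.positions.length = T.size := by
  induction T with
  | nil => simp [positions, size]
  | node l r ihl ihr => simp [positions, size, ihl, ihr]

instance (T : BinTree) : Finite T.Pos := List.finite_toSet T.positions

lemma card_pos (T : BinTree) : Nat.card T.Pos = T.size := by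
  rw [← positions_length, Nat.card_congr (List.Nodup.getEquiv _ T.positions_nodup).symm]
  simp

lemma card_lab_congr (T : BinTree) {α β : Type} [LinearOrder α] [LinearOrder β] (e : α ≃o β) :
    Nat.card (T.Lab α) = Nat.card (T.Lab β) := by
  refine Nat.card_congr ⟨fun f => ⟨e ∘ f.1, e.bijective.comp f.2.1, fun v w h => ?_⟩,
    fun f => ⟨e.symm ∘ f.1, e.symm.bijective.comp f.2.1, fun v w h => ?_⟩, ?_, ?_⟩
  · simpa using f.2.2 v w h
  · simpa using f.2.2 v w h
  · intro f; ext; simp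
  · intro f; ext; simp

lemma card_lab_eq (T : BinTree) {α : Type} [LinearOrder α] [Fintype α]
    (h : Fintype.card α = T.size) : Nat.card (T.Lab α) = T.incLabelings := by
  rw [← card_lab_congr T (Fintype.orderIsoFinOfCardEq α h)]
  rfl

lemma card_lab_ne (T : BinTree) {α : Type} [LinearOrder α] [Fintype α]
    (h : Fintype.card α ≠ T.size) : Nat.card (T.Lab α) = 0 := by
  have : IsEmpty (T.Lab α) := by
    refine ⟨fun f => h ?_⟩
    rw [← card_pos, Nat.card_congr (Equiv.ofBijective _ f.2.1)]
    simp
  simp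

lemma prefix_mem (T : BinTree) (p : List Bool) (b : Bool) (h : p ++ [b] ∈ T.positions) :
    p ∈ T.positions := by
  induction T generalizing p with
  | nil => simp [positions] at h
  | node l r ihl ihr =>
    cases p with
    | nil => simp [positions]
    | cons c p =>
      cases c
      · simp [positions] at h ⊢; exact ihl _ h
      · simp [positions] at h ⊢; exact ihr _ h

def rootPos (l r : BinTree) : (node l r).Pos := ⟨[], by simp [positions]⟩
def Lp {l r : BinTree} (v : l.Pos) : (node l r).Pos := ⟨false :: v.1, by simp [positions, v.2]⟩
def Rp {l r : BinTree} (v : r.Pos) : (node l r).Pos := ⟨true :: v.1, by simp [positions, v.2]⟩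

def nodeElim {l r : BinTree} {α : Type} (a : α) (f : l.Pos → α) (g : r.Pos → α) :
    (node l r).Pos → α
  | ⟨[], _⟩ => a
  | ⟨false :: p, h⟩ => f ⟨p, by simpa [positions] using h⟩
  | ⟨true :: p, h⟩ => g ⟨p, by simpa [positions] using h⟩

lemma pos_cases {l r : BinTree} (x : (node l r).Pos) :
    x = rootPos l r ∨ (∃ v, x = Lp v) ∨ ∃ v, x = Rp v := by
  obtain ⟨p, h⟩ := x
  match p, h with
  | [], h => left; rfl
  | false :: p, h => right; left; exact ⟨⟨p, by simpa [positions] using h⟩, rfl⟩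
  | true :: p, h => right; right; exact ⟨⟨p, by simpa [positions] using h⟩, rfl⟩

lemma root_le {l r : BinTree} {α : Type} [LinearOrder α] {ℓ : (node l r).Pos → α}
    (h : (node l r).Inc ℓ) (x : (node l r).Pos) : ℓ (rootPos l r) ≤ ℓ x := by
  obtain ⟨p, hp⟩ := x
  induction p using List.reverseRecOn with
  | nil => exact le_rfl
  | append_singleton p b ih =>
    exact (ih (prefix_mem _ _ _ hp)).trans (h ⟨p, prefix_mem _ _ _ hp⟩ ⟨_, hp⟩ ⟨b, rfl⟩).le

section elim
variable {l r : BinTree} {α : Type} (a : α) (f : l.Pos → α) (g : r.Pos → α)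
@[simp] lemma elim_root : nodeElim a f g (rootPos l r) = a := rfl
@[simp] lemma elim_L (v) : nodeElim a f g (Lp v) = f v := rfl
@[simp] lemma elim_R (v) : nodeElim a f g (Rp v) = g v := rfl
end elim

lemma Lp_inj {l r : BinTree} : Function.Injective (Lp : l.Pos → (node l r).Pos) := by
  intro a b h; simpa [Lp, Subtype.ext_iff] using h
lemma Rp_inj {l r : BinTree} : Function.Injective (Rp : r.Pos → (node l r).Pos) := by
  intro a b h; simpa [Rp, Subtype.ext_iff] using h

lemma inc_node {l r : BinTree} {α : Type} [LT α] (ℓ : (node l r).Pos → α)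
    (h0 : ∀ v : l.Pos, ℓ (rootPos l r) < ℓ (Lp v)) (h1 : ∀ v : r.Pos, ℓ (rootPos l r) < ℓ (Rp v))
    (hl : l.Inc (fun v => ℓ (Lp v))) (hr : r.Inc (fun v => ℓ (Rp v))) : (node l r).Inc ℓ := by
  rintro v w ⟨b, hb⟩
  rcases pos_cases v with rfl | ⟨v, rfl⟩ | ⟨v, rfl⟩ <;>
  rcases pos_cases w with rfl | ⟨w, rfl⟩ | ⟨w, rfl⟩ <;> simp [Lp, Rp, rootPos] at hb
  · exact h0 _
  · exact h1 _
  · exact hl v w ⟨b, hb⟩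
  · exact hr v w ⟨b, hb⟩

abbrev Split (l r : BinTree) (m : ℕ) :=
  Σ S : Finset (Fin m), l.Lab {x // x ∈ S} × r.Lab {x // x ∉ S}

def glueFun {l r : BinTree} {m : ℕ} (x : Split l r m) : (node l r).Pos → Fin (m + 1) :=
  nodeElim 0 (fun v => (x.2.1.1 v).1.succ) (fun v => (x.2.2.1 v).1.succ)

lemma glue_ok {l r : BinTree} {m : ℕ} (x : Split l r m) :
    Function.Bijective (glueFun x) ∧ (node l r).Inc (glueFun x) := by
  obtain ⟨S, ⟨f, hf, hfi⟩, ⟨g, hg, hgi⟩⟩ := x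
  have key : ∀ v w, (f v).1 ≠ (g w).1 := fun v w h => (g w).2 (h ▸ (f v).2)
  refine ⟨⟨?_, ?_⟩, ?_⟩
  · intro v w h
    rcases pos_cases v with rfl | ⟨v, rfl⟩ | ⟨v, rfl⟩ <;>
    rcases pos_cases w with rfl | ⟨w, rfl⟩ | ⟨w, rfl⟩ <;> simp [glueFun] at h
    · rfl
    · exact absurd h.symm (Fin.succ_ne_zero _)
    · exact absurd h.symm (Fin.succ_ne_zero _)
    · rw [hf.1 h]
    · exact absurd h (key _ _)
    · exact absurd h.symm (key _ _)
    · rw [hg.1 (Subtype.ext h)]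
  · intro y
    refine Fin.cases ⟨rootPos l r, rfl⟩ (fun y => ?_) y
    by_cases hy : y ∈ S
    · obtain ⟨v, hv⟩ := hf.2 ⟨y, hy⟩
      exact ⟨Lp v, by simp [glueFun, hv]⟩
    · obtain ⟨v, hv⟩ := hg.2 ⟨y, hy⟩
      exact ⟨Rp v, by simp [glueFun, hv]⟩
  · apply inc_node
    · intro v; exact Fin.succ_pos _
    · intro v; exact Fin.succ_pos _
    · intro v w h; exact Fin.succ_lt_succ_iff.2 (hfi v w h)
    · intro v w h; exact Fin.succ_lt_succ_iff.2 (hgi v w h)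

def glue {l r : BinTree} {m : ℕ} (x : Split l r m) : (node l r).Lab (Fin (m + 1)) :=
  ⟨glueFun x, glue_ok x⟩

lemma glue_inj {l r : BinTree} {m : ℕ} :
    Function.Injective (glue : Split l r m → (node l r).Lab (Fin (m + 1))) := by
  rintro ⟨S, ⟨f, hf, hfi⟩, ⟨g, hg, hgi⟩⟩ ⟨S', ⟨f', hf', hfi'⟩, ⟨g', hg', hgi'⟩⟩ h
  have h' := congrArg Subtype.val h
  have h1 : ∀ v, (f v).1 = (f' v).1 := fun v => by
    simpa [glue, glueFun] using congrFun h' (Lp v)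
  have h2 : ∀ v, (g v).1 = (g' v).1 := fun v => by
    simpa [glue, glueFun] using congrFun h' (Rp v)
  have hS : S = S' := by
    ext y
    constructor
    · intro hy
      obtain ⟨v, hv⟩ := hf.2 ⟨y, hy⟩
      have := (f' v).2
      rwa [← h1, hv] at this
    · intro hy
      obtain ⟨v, hv⟩ := hf'.2 ⟨y, hy⟩
      have := (f v).2
      rwa [h1, hv] at this
  subst hS
  have h1' : f = f' := funext fun v => Subtype.ext (h1 v)
  have h2' : g = g' := funext fun v => Subtype.ext (h2 v)
  subst h1' h2'
  rfl

lemma glue_surj {l r : BinTree} {m : ℕ} :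
    Function.Surjective (glue : Split l r m → (node l r).Lab (Fin (m + 1))) := by
  classical
  rintro ⟨ℓ, hb, hi⟩
  have h0 : ℓ (rootPos l r) = 0 := by
    obtain ⟨p, hp⟩ := hb.2 0
    exact Fin.le_zero_iff.1 (hp ▸ root_le hi p)
  have hL : ∀ v : l.Pos, ℓ (Lp v) ≠ 0 := fun v h => by
    have := hb.1 (h.trans h0.symm); exact absurd (congrArg Subtype.val this) (by simp [Lp, rootPos])
  have hR : ∀ v : r.Pos, ℓ (Rp v) ≠ 0 := fun v h => by
    have := hb.1 (h.trans h0.symm); exact absurd (congrArg Subtype.val this) (by simp [Rp, rootPos])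
  let S : Finset (Fin m) := Finset.univ.filter fun y => ∃ v : l.Pos, ℓ (Lp v) = y.succ
  have hLS : ∀ v : l.Pos, (ℓ (Lp v)).pred (hL v) ∈ S := fun v => by
    simp only [S, Finset.mem_filter, Finset.mem_univ, true_and]
    exact ⟨v, by simp⟩
  have hRS : ∀ v : r.Pos, (ℓ (Rp v)).pred (hR v) ∉ S := fun v => by
    simp only [S, Finset.mem_filter, Finset.mem_univ, true_and]
    rintro ⟨w, hw⟩
    simp only [Fin.succ_pred] at hw
    have := hb.1 hw
    exact absurd (congrArg Subtype.val this) (by simp [Lp, Rp])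
  refine ⟨⟨S, ⟨fun v => ⟨_, hLS v⟩, ⟨?_, ?_⟩, ?_⟩, ⟨fun v => ⟨_, hRS v⟩, ⟨?_, ?_⟩, ?_⟩⟩, ?_⟩
  · intro v w h
    have := congrArg Subtype.val h
    exact Lp_inj (hb.1 ((Fin.pred_inj (ha := hL v) (hb := hL w)).1 this))
  · rintro ⟨y, hy⟩
    have hy' := hy
    simp only [S, Finset.mem_filter, Finset.mem_univ, true_and] at hy'
    obtain ⟨v, hv⟩ := hy'
    exact ⟨v, Subtype.ext (by simp [hv])⟩
  · intro v w ⟨b, h⟩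
    exact (Fin.pred_lt_pred_iff (ha := hL v) (hb := hL w)).2 (hi (Lp v) (Lp w) ⟨b, by simp [Lp, h]⟩)
  · intro v w h
    have := congrArg Subtype.val h
    exact Rp_inj (hb.1 ((Fin.pred_inj (ha := hR v) (hb := hR w)).1 this))
  · rintro ⟨y, hy⟩
    obtain ⟨p, hp⟩ := hb.2 y.succ
    rcases pos_cases p with rfl | ⟨v, rfl⟩ | ⟨v, rfl⟩
    · rw [h0] at hp; exact absurd hp.symm (Fin.succ_ne_zero _)
    · exact absurd (by simp only [S, Finset.mem_filter, Finset.mem_univ, true_and]; exact ⟨v, hp⟩) hy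
    · exact ⟨v, Subtype.ext (by simp [hp])⟩
  · intro v w ⟨b, h⟩
    exact (Fin.pred_lt_pred_iff (ha := hR v) (hb := hR w)).2 (hi (Rp v) (Rp w) ⟨b, by simp [Rp, h]⟩)
  · apply Subtype.ext
    funext x
    rcases pos_cases x with rfl | ⟨v, rfl⟩ | ⟨v, rfl⟩ <;> simp [glue, glueFun, h0]

lemma incLabelings_node (l r : BinTree) : (node l r).incLabelings =
    (l.size + r.size).choose l.size * l.incLabelings * r.incLabelings := by
  classical
  have h1 : (node l r).incLabelings = Nat.card (Split l r (l.size + r.size)) :=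
    (Nat.card_congr (Equiv.ofBijective _ ⟨glue_inj, glue_surj⟩)).symm
  rw [h1, Nat.card_sigma]
  have h2 : ∀ S : Finset (Fin (l.size + r.size)),
      Nat.card (l.Lab {x // x ∈ S} × r.Lab {x // x ∉ S}) =
        if S ∈ Finset.powersetCard l.size Finset.univ then l.incLabelings * r.incLabelings
        else 0 := by
    intro S
    rw [Nat.card_prod]
    split_ifs with h
    · have hc : S.card = l.size := (Finset.mem_powersetCard.1 h).2
      rw [card_lab_eq l (by simpa using hc), card_lab_eq r]
      rw [Fintype.card_subtype_compl]; simp [hc]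
    · rw [card_lab_ne l, zero_mul]
      intro hc; apply h
      simpa [Finset.mem_powersetCard] using hc
  simp_rw [h2]
  rw [Finset.sum_ite_mem, Finset.univ_inter, Finset.sum_const, Finset.card_powersetCard]
  simp [mul_assoc]

lemma incLabelings_nil : nil.incLabelings = 1 := by
  have : IsEmpty nil.Pos := ⟨fun p => by simpa [positions] using p.2⟩
  have h : Nat.card (nil.Lab (Fin 0)) = 1 := by
    rw [Nat.card_eq_one_iff_unique]
    refine ⟨⟨fun a b => Subtype.ext (Subsingleton.elim _ _)⟩,
      ⟨⟨fun p => isEmptyElim p, ⟨fun p => isEmptyElim p, fun x => x.elim0⟩, fun p => isEmptyElim p⟩⟩⟩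
  exact h

lemma size_completion (T : BinTree) : T.completion.size = 2 * T.size + 1 := by
  induction T with
  | nil => rfl
  | node l r ihl ihr => simp only [completion, size, ihl, ihr]; ring

def splitEquiv (n : ℕ) : {T : BinTree // T.size = n + 1} ≃
    Σ i : Fin (n + 1), {T : BinTree // T.size = i} × {T : BinTree // T.size = n - i} where
  toFun
    | ⟨.nil, h⟩ => by simp [size] at h
    | ⟨.node l r, h⟩ => ⟨⟨l.size, by simp [size] at h; omega⟩, ⟨l, rfl⟩,
        ⟨r, by simp [size] at h; simp; omega⟩⟩
  invFun x := ⟨.node x.2.1.1 x.2.2.1, by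
    have := x.1.2; have := x.2.1.2; have := x.2.2.2; simp only [size]; omega⟩
  left_inv := by
    rintro ⟨T, h⟩
    cases T with
    | nil => simp [size] at h
    | node l r => rfl
  right_inv := by
    rintro ⟨⟨i, hi⟩, ⟨l, hl⟩, ⟨r, hr⟩⟩
    simp only at hl hr
    subst hl
    rfl

instance finite_size (n : ℕ) : Finite {T : BinTree // T.size = n} := by
  induction n using Nat.strong_induction_on with
  | _ n ih =>
    cases n with
    | zero =>
      refine Finite.of_injective (β := Unit) (fun _ => ()) ?_
      rintro ⟨a, ha⟩ ⟨b, hb⟩ _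
      cases a <;> cases b <;> simp [size] at ha hb ⊢
    | succ n =>
      have h1 : ∀ i : Fin (n + 1), Finite {T : BinTree // T.size = i} := fun i => ih _ i.2
      have h2 : ∀ i : Fin (n + 1), Finite {T : BinTree // T.size = n - i} :=
        fun i => ih _ (by omega)
      exact Finite.of_equiv _ (splitEquiv n).symm

lemma sum_pairs (f : ℕ → ℕ) (k : ℕ) :
    ∑ j ∈ Finset.range (2 * k), f j = ∑ i ∈ Finset.range k, (f (2 * i) + f (2 * i + 1)) := by
  induction k with
  | zero => simp
  | succ k ih =>
    rw [Finset.sum_range_succ, ← ih, show 2 * (k + 1) = 2 * k + 1 + 1 by ring,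
      Finset.sum_range_succ, Finset.sum_range_succ, add_assoc]

lemma sum_choose_odd (n : ℕ) :
    ∑ i ∈ Finset.range (n + 1), (2 * n + 2).choose (2 * i + 1) = 2 ^ (2 * n + 1) := by
  rw [← Nat.sum_range_choose, show 2 * n + 1 + 1 = 2 * (n + 1) by ring, sum_pairs]
  rfl

noncomputable def wt (T : BinTree) : ℝ :=
  (T.completion.incLabelings : ℝ) * T.hookProd (fun h => 1 / (2 : ℝ) ^ (2 * h - 1))

lemma wt_nil : wt nil = 1 := by
  simp [wt, completion, hookProd, incLabelings_node, incLabelings_nil, size]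

lemma wt_node (l r : BinTree) (n : ℕ) (h : l.size + r.size = n) :
    wt (node l r) =
      ((2 * n + 2).choose (2 * l.size + 1) : ℝ) / 2 ^ (2 * n + 1) * (wt l * wt r) := by
  simp only [wt, completion, hookProd, incLabelings_node, size_completion, h]
  rw [show 2 * l.size + 1 + (2 * r.size + 1) = 2 * n + 2 by omega,
    show 2 * (n + 1) - 1 = 2 * n + 1 by omega]
  push_cast
  ring

lemma tsum_wt (n : ℕ) : ∑' T : {T : BinTree // T.size = n}, wt T = 1 := by
  induction n using Nat.strong_induction_on with
  | _ n ih =>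
    cases n with
    | zero =>
      rw [tsum_eq_single ⟨nil, rfl⟩]
      · exact wt_nil
      · rintro ⟨a, ha⟩ h
        cases a <;> simp [size] at ha h
    | succ n =>
      letI : ∀ k, Fintype {T : BinTree // T.size = k} := fun k => Fintype.ofFinite _
      rw [← (splitEquiv n).symm.tsum_eq, tsum_fintype, Fintype.sum_sigma]
      have key : ∀ i : Fin (n + 1),
          ∑ x : {T : BinTree // T.size = i} × {T : BinTree // T.size = n - i},
            wt ((splitEquiv n).symm ⟨i, x⟩).1 =
          ((2 * n + 2).choose (2 * i + 1) : ℝ) / 2 ^ (2 * n + 1) := by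
        intro i
        have h1 := ih i (by omega)
        have h2 := ih (n - i) (by omega)
        rw [tsum_fintype] at h1 h2
        rw [Fintype.sum_prod_type]
        have : ∀ (x : {T : BinTree // T.size = i}) (y : {T : BinTree // T.size = n - i}),
            wt ((splitEquiv n).symm ⟨i, x, y⟩).1 =
            ((2 * n + 2).choose (2 * i + 1) : ℝ) / 2 ^ (2 * n + 1) * (wt x.1 * wt y.1) := by
          intro x y
          have := wt_node x.1 y.1 n (by have := x.2; have := y.2; omega)
          rw [x.2] at this
          exact this
        simp_rw [this, ← Finset.mul_sum, h2, mul_one, h1, mul_one]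
      rw [Finset.sum_congr rfl (fun i _ => key i), ← Finset.sum_div,
        Fin.sum_univ_eq_sum_range (fun i => ((2 * n + 2).choose (2 * i + 1) : ℝ)),
        ← Nat.cast_sum, sum_choose_odd]
      push_cast
      exact div_self (by positivity)

end BinTree

/-- For every positive integer `n`,
`∑_{T ∈ B(n)} f^{T̂} ∏_{v ∈ T} 1/2^{2h_v-1} = 1`, where `T̂` is the
completion of `T`, `f^{T̂}` its number of increasing labelings, and the hook
lengths `h_v` are computed in `T`. -/
theorem han_second_formula_rewritten (n : ℕ) (hn : 0 < n) :
    ∑' T : {T : BinTree // T.size = n},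
      ((T : BinTree).completion.incLabelings : ℝ) *
        (T : BinTree).hookProd (fun h => 1 / (2 : ℝ) ^ (2 * h - 1)) = 1 := by
  exact BinTree.tsum_wt n
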